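/- Let w be a nonempty word over a totally ordered alphabet Σ that is not an inverse Lyndon word, and let ICFL(w) = (m1, …, mk). Then for each i with 1 < i ≤ k, the word m_i is not a factor of m1 m2 ⋯ m_{i−1}. -/

import Mathlib

/-!
Write `x ≪ y` for the strict part of the lexicographic order, in which `x` and `y` differ at some
common position (`SLt x y`). Say that `x` is *suffix-dominated* by `y` if every nonempty suffix `s`
of `x` satisfies `s ≪ y` (`SuffixDom x y`). This relation is transitive, and `s ≪ y` is stable under
appending letters on either side, so if every word of a list `L` is suffix-dominated by `y`, then an
occurrence of `y` in the concatenation of `L`, which starts with a nonempty suffix of some word of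
`L`, is impossible (`not_infix_flatten`).

It remains to see that consecutive factors of `ICFL(w)` are suffix-dominated (`IsICFL.isChain`),
by induction on the factorization.

* `IsBRE.suffixDom` : `p` is suffix-dominated by its bounded right extension `p̄ = r b`, where
  `p = r a s'` and `a < b`. As `p` is inverse Lyndon, a nonempty proper suffix `s` of `p` that
  violates `s ≪ p̄` is a border of `p` and a prefix of `r`, say `r = s r'`. Since `p r` is inverse
  Lyndon, its suffix `s r` is at most `p r = s r' a ⋯`, so `r` is at most `r' a ⋯`.
  Since `p̄ = s r' b` is inverse Lyndon, its suffix `r' b` is at most `s r' = r` (compare the first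
  `|r' b| ≤ |r|` letters). Hence `r' b` is at most `r' a ⋯`, contradicting `a < b`.
* `IsBRE.suffixDom_append` : if a prefix `m₁` of `r` is merged with `p` and `m₁` is suffix-dominated
  by `m₂`, then so is `p m₁`. Indeed `p` begins with `m₁`, so `p m₁ ≪ m₂`; and as `p m₁` is inverse
  Lyndon, a suffix `s m₁` is either `≪ p m₁` or a prefix of `p m₁`, in which case it begins with
  `m₁` too.
-/

open List

section Defs

variable {α : Type*} [LinearOrder α]

/-- The lexicographic order `x ≺ y` on words over the ordered alphabet `α`. -/
def lexLt (x y : List α) : Prop := List.Lex (· < ·) x y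

/-- The inverse `<_in` of the letter order. -/
def invLt (a b : α) : Prop := b < a

/-- `x ≪ y` : `x ≺ y` and `x` is not a (proper) prefix of `y`. -/
def lexLtLt (x y : List α) : Prop := lexLt x y ∧ ¬ x <+: y

/-- `w` is a Lyndon word with respect to the letter order `r`:
nonempty, primitive, and `≺ᵣ`-smaller than each of its proper nonempty suffixes. -/
def IsLyndonWith (r : α → α → Prop) (w : List α) : Prop :=
  w ≠ [] ∧ (∀ (u : List α) (n : ℕ), w = (List.replicate n u).flatten → n = 1) ∧
  ∀ s : List α, s ≠ [] → s ≠ w → s <:+ w → List.Lex r w s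

/-- `L` is the Lyndon factorization of `w` with respect to the letter order `r`:
a nonempty sequence of Lyndon words, nonincreasing for `≺ᵣ`, whose product is `w`. -/
def IsCFLWith (r : α → α → Prop) (w : List α) (L : List (List α)) : Prop :=
  L ≠ [] ∧ L.flatten = w ∧ (∀ l ∈ L, IsLyndonWith r l) ∧
  List.Chain' (fun x y => ¬ List.Lex r x y) L

/-- an anti-prenecklace: a prefix of a power of an anti-Lyndon word. -/
def IsAntiPrenecklace (z : List α) : Prop :=
  ∃ (l : List α) (k : ℕ), IsLyndonWith invLt l ∧ z <+: (List.replicate k l).flatten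

/-- an inverse Lyndon word: each proper nonempty suffix is `≺`-smaller than `w`. -/
def IsInvLyndon (w : List α) : Prop :=
  w ≠ [] ∧ ∀ s : List α, s ≠ [] → s ≠ w → s <:+ w → lexLt s w

/-- `z` is a border of `w`: a proper prefix and a suffix of `w`. -/
def IsBorder (z w : List α) : Prop := z <+: w ∧ z ≠ w ∧ z <:+ w

/-- `(p, pbar) ∈ Pref_bre(w)`: `p` is an inverse Lyndon word which is a nonempty proper
prefix of `w = p v` and `pbar` is its bounded right extension. -/
def IsBRE (p pbar w : List α) : Prop :=
  IsInvLyndon p ∧ p ≠ [] ∧ p ≠ w ∧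
  (∃ v : List α, w = p ++ v ∧ pbar <+: v) ∧ pbar ≠ [] ∧
  IsInvLyndon pbar ∧
  (∀ z' : List α, z' ≠ [] → z' ≠ pbar → z' <+: pbar → IsInvLyndon (p ++ z')) ∧
  ¬ IsInvLyndon (p ++ pbar) ∧
  lexLt p pbar ∧ ¬ p <+: pbar

/-- The canonical inverse Lyndon factorization `ICFL(w) = M`. -/
inductive IsICFL : List α → List (List α) → Prop
  | base (w : List α) : IsInvLyndon w → IsICFL w [w]
  | ext (w p pbar v m1 : List α) (ms : List (List α)) :
      ¬ IsInvLyndon w → IsBRE p pbar w → w = p ++ v →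
      IsICFL v (m1 :: ms) → pbar <+: m1 → IsICFL w (p :: m1 :: ms)
  | grp (w p pbar v r : List α) (a b : α) (s m1 : List α) (ms : List (List α)) :
      ¬ IsInvLyndon w → IsBRE p pbar w → w = p ++ v →
      p = r ++ a :: s → pbar = r ++ [b] → a < b →
      IsICFL v (m1 :: ms) → m1 <+: r → IsICFL w ((p ++ m1) :: ms)

/-- the longest common prefix of two words. -/
def lcp : List α → List α → List α
  | a :: x, b :: y => if a = b then a :: lcp x y else []
  | _, _ => []

end Defs

/-! ### The relation `≪` -/

/-- `SLt x y` is the relation `x ≪ y`: the words differ at some common position, and at the first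
such position the letter of `x` is smaller. It is defined by recursion along the common prefix;
`lexLt_cases` and `slt_iff_exists` relate it to `≺`. -/
inductive SLt {α : Type*} [LinearOrder α] : List α → List α → Prop
  | head {a b : α} (x y : List α) : a < b → SLt (a :: x) (b :: y)
  | cons (a : α) {x y : List α} : SLt x y → SLt (a :: x) (a :: y)

/-- `x` is suffix-dominated by `y`: each nonempty suffix of `x`, including `x` itself, is `≪ y`.
The first conjunct, the case `s = x` of the second, excludes empty `x` and `y`. -/
def SuffixDom {α : Type*} [LinearOrder α] (x y : List α) : Prop :=
  SLt x y ∧ ∀ s, s ≠ [] → s <:+ x → SLt s y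

section

variable {α : Type*} [LinearOrder α]

theorem lexLt_cases {x y : List α} (h : lexLt x y) : x <+: y ∨ SLt x y := by
  unfold lexLt at h
  induction h with
  | nil => exact Or.inl (List.nil_prefix)
  | cons _ ih =>
    rcases ih with ih | ih
    · exact Or.inl (by simpa using ih)
    · exact Or.inr (.cons _ ih)
  | rel h => exact Or.inr (.head _ _ h)

theorem slt_iff_exists {x y : List α} :
    SLt x y ↔ ∃ r a b s t, a < b ∧ x = r ++ a :: s ∧ y = r ++ b :: t := by
  constructor
  · intro h
    induction h with
    | @head a b x y h => exact ⟨[], a, b, x, y, h, rfl, rfl⟩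
    | cons c _ ih =>
      obtain ⟨r, a, b, s, t, h, rfl, rfl⟩ := ih
      exact ⟨c :: r, a, b, s, t, h, rfl, rfl⟩
  · rintro ⟨r, a, b, s, t, h, rfl, rfl⟩
    induction r with
    | nil => exact .head _ _ h
    | cons c r ih => exact .cons _ ih

theorem SLt.irrefl {x : List α} : ¬ SLt x x := by
  intro h
  induction x with
  | nil => cases h
  | cons a x ih =>
    cases h with
    | head _ _ h => exact lt_irrefl _ h
    | cons _ h => exact ih h

theorem SLt.right_ne_nil {x y : List α} (h : SLt x y) : y ≠ [] := by
  cases h <;> simp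

theorem SLt.trans {x y z : List α} (h : SLt x y) (h' : SLt y z) : SLt x z := by
  induction h generalizing z with
  | head x y h =>
    cases h' with
    | head _ _ h' => exact .head _ _ (h.trans h')
    | cons _ h' => exact .head _ _ h
  | cons a h ih =>
    cases h' with
    | head _ _ h' => exact .head _ _ h'
    | cons _ h' => exact .cons _ (ih h')

theorem SLt.append {x y : List α} (h : SLt x y) (u v : List α) : SLt (x ++ u) (y ++ v) := by
  induction h with
  | head x y h => exact .head _ _ h
  | cons a h ih => exact .cons _ ih

theorem SLt.mono {x y x' y' : List α} (h : SLt x y) (hx : x <+: x') (hy : y <+: y') :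
    SLt x' y' := by
  obtain ⟨u, rfl⟩ := hx
  obtain ⟨v, rfl⟩ := hy
  exact h.append u v

theorem SLt.of_append_left {s x y : List α} (h : SLt (s ++ x) (s ++ y)) : SLt x y := by
  induction s with
  | nil => exact h
  | cons a s ih =>
    cases h with
    | head _ _ h => exact absurd h (lt_irrefl _)
    | cons _ h => exact ih h

/-- The first difference of `x` and `y ++ z` lies within `y` when `x` is no longer than `y`. -/
theorem SLt.of_append_right {x y z : List α} (h : SLt x (y ++ z)) (hl : x.length ≤ y.length) :
    SLt x y := by
  induction y generalizing x with
  | nil =>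
    have : x = [] := by simpa using hl
    subst this
    cases h
  | cons b y ih =>
    cases h with
    | head _ _ h => exact .head _ _ h
    | cons _ h => exact .cons _ (ih h (by simpa using hl))

/-! ### Suffix domination -/

theorem SuffixDom.trans {x y z : List α} (h : SuffixDom x y) (h' : SuffixDom y z) :
    SuffixDom x z :=
  ⟨h.1.trans h'.1, fun s hs hsx => (h.2 s hs hsx).trans h'.1⟩

theorem not_infix_flatten {y : List α} (hy : y ≠ []) (L : List (List α))
    (h : ∀ x ∈ L, SuffixDom x y) : ¬ y <:+: L.flatten := by
  induction L with
  | nil => simpa using hy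
  | cons x L ih =>
    have ih := ih fun z hz => h z (List.mem_cons_of_mem _ hz)
    rintro ⟨u, t, hut⟩
    rw [List.flatten_cons, List.append_assoc, List.append_eq_append_iff] at hut
    rcases hut with ⟨s, hs, hst⟩ | ⟨u', _, hu'⟩
    · -- the occurrence of `y` starts at the suffix `s` of `x`
      rcases eq_or_ne s [] with rfl | hs0
      · exact ih ⟨[], t, by simpa using hst⟩
      · have := ((h x (by simp)).2 s hs0 ⟨u, hs.symm⟩).append L.flatten t
        rw [hst] at this
        exact this.irrefl
    · exact ih ⟨u', t, by rw [hu', List.append_assoc]⟩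

/-! ### Bounded right extensions and the factorization -/

theorem IsInvLyndon.suffix_cases {w s : List α} (hw : IsInvLyndon w) (hs : s ≠ [])
    (hsw : s <:+ w) : s <+: w ∨ SLt s w := by
  rcases eq_or_ne s w with rfl | hne
  · exact Or.inl (List.prefix_refl _)
  · exact lexLt_cases (hw.2 s hs hne hsw)

/-- The bounded right extension ends exactly at its first difference with `p`: if it were longer,
`p r b` would be inverse Lyndon, although its suffix `r b` is larger than `p = r a ⋯`. -/
theorem IsBRE.exists_eq {p pbar w : List α} (h : IsBRE p pbar w) :
    ∃ r a b s, a < b ∧ p = r ++ a :: s ∧ pbar = r ++ [b] := by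
  obtain ⟨-, -, -, -, -, -, hz, -, hlt, hnp⟩ := h
  obtain ⟨r, a, b, s, t, hab, rfl, rfl⟩ := slt_iff_exists.1 ((lexLt_cases hlt).resolve_left hnp)
  refine ⟨r, a, b, s, hab, rfl, ?_⟩
  by_contra hne
  have hI := hz (r ++ [b]) (by simp) (Ne.symm hne) ⟨t, by simp⟩
  have hslt : SLt ((r ++ a :: s) ++ (r ++ [b])) (r ++ [b]) :=
    slt_iff_exists.2 ⟨r, a, b, s ++ (r ++ [b]), [], hab, by simp, rfl⟩
  rcases hI.suffix_cases (s := r ++ [b]) (by simp) (List.suffix_append _ _) with h | h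
  · exact (hslt.mono (List.prefix_refl _) h).irrefl
  · exact (hslt.trans h).irrefl

theorem IsBRE.suffixDom {p pbar w : List α} (h : IsBRE p pbar w) : SuffixDom p pbar := by
  obtain ⟨r, a, b, s', hab, hp, hpb⟩ := h.exists_eq
  obtain ⟨hpI, -, -, -, -, hpbI, hz, -, -, -⟩ := h
  have hlt : SLt p pbar := slt_iff_exists.2 ⟨r, a, b, s', [], hab, hp, hpb⟩
  refine ⟨hlt, fun s hs hsp => ?_⟩
  rcases hpI.suffix_cases hs hsp with hpre | hslt
  swap
  · exact hslt.trans hlt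
  have hra : r ++ [a] <+: p := ⟨s', by simp [hp]⟩
  have hrab : SLt (r ++ [a]) pbar := slt_iff_exists.2 ⟨r, a, b, [], [], hab, rfl, hpb⟩
  rcases le_or_gt (r ++ [a]).length s.length with hl | hl
  · exact hrab.mono (List.prefix_of_prefix_length_le hra hpre hl) (List.prefix_refl _)
  -- otherwise the border `s` of `p` is a prefix of `r`
  exfalso
  have hsr : s <+: r := by
    refine List.prefix_of_prefix_length_le hpre ⟨a :: s', hp.symm⟩ ?_
    simp at hl
    omega
  obtain ⟨r', hr'⟩ := hsr
  have hspos : 0 < s.length := List.length_pos_iff.2 hs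
  set y := r' ++ a :: (s' ++ r) with hy
  have hpr : p ++ r = s ++ y := by rw [hy, hp, ← hr']; simp
  -- `r` is at most `y = r' a ⋯`
  have h1 : r <+: y ∨ SLt r y := by
    have hr0 : r ≠ [] := by
      rintro rfl
      exact hs (List.append_eq_nil_iff.1 hr').1
    have hI := hz r hr0 (by rw [hpb]; simp) ⟨[b], hpb.symm⟩
    obtain ⟨q, hq⟩ := hsp
    have := hI.suffix_cases (s := s ++ r) (by simp [hs]) ⟨q, by rw [← hq]; simp⟩
    rw [hpr] at this
    exact this.imp (List.prefix_append_right_inj s).1 SLt.of_append_left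
  -- `r' b` is at most `r`
  have h2 : r' ++ [b] <+: r ∨ SLt (r' ++ [b]) r := by
    have hl' : (r' ++ [b]).length ≤ r.length := by
      rw [← hr']; simp; omega
    rcases hpbI.suffix_cases (s := r' ++ [b]) (by simp) ⟨s, by rw [hpb, ← hr']; simp⟩ with h | h
    · exact Or.inl (List.prefix_of_prefix_length_le h ⟨[b], hpb.symm⟩ hl')
    · rw [hpb] at h
      exact Or.inr (h.of_append_right hl')
  have h3 : SLt y (r' ++ [b]) := slt_iff_exists.2 ⟨r', a, b, s' ++ r, [], hab, hy, rfl⟩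
  have h4 : SLt y r := h2.elim (h3.mono (List.prefix_refl _)) h3.trans
  exact h1.elim (fun h => (h4.mono (List.prefix_refl _) h).irrefl) (fun h => (h4.trans h).irrefl)

theorem IsBRE.suffixDom_append {p r w m₁ m₂ : List α} {b : α} (h : IsBRE p (r ++ [b]) w)
    (hrp : r <+: p) (hm : m₁ <+: r) (hd : SuffixDom m₁ m₂) : SuffixDom (p ++ m₁) m₂ := by
  have hm0 : m₁ ≠ [] := by
    rintro rfl
    cases hd.1
  have hI : IsInvLyndon (p ++ m₁) := by
    refine h.2.2.2.2.2.2.1 m₁ hm0 ?_ (hm.trans (List.prefix_append _ _))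
    rintro rfl
    simpa using hm.length_le
  have hmp : m₁ <+: p ++ m₁ := (hm.trans hrp).trans (List.prefix_append _ _)
  have hlt : SLt (p ++ m₁) m₂ := hd.1.mono hmp (List.prefix_refl _)
  refine ⟨hlt, fun u hu hsuf => ?_⟩
  rcases le_total u.length m₁.length with hl | hl
  · exact hd.2 u hu (List.suffix_of_suffix_length_le hsuf (List.suffix_append _ _) hl)
  · rcases hI.suffix_cases hu hsuf with hpre | hslt
    · exact hd.1.mono (List.prefix_of_prefix_length_le hmp hpre hl) (List.prefix_refl _)
    · exact hslt.trans hlt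

/-- Consecutive factors of `ICFL(w)` are suffix-dominated, each by the next. -/
theorem IsICFL.isChain {w : List α} {M : List (List α)} (h : IsICFL w M) :
    List.IsChain SuffixDom M := by
  induction h with
  | base w _ => simp
  | ext w p pbar v m1 ms _ hb _ _ hpre ih =>
    refine List.isChain_cons_cons.2 ⟨?_, ih⟩
    have hd := hb.suffixDom
    exact ⟨hd.1.mono (List.prefix_refl _) hpre,
      fun s hs hsp => (hd.2 s hs hsp).mono (List.prefix_refl _) hpre⟩
  | grp w p pbar v r a b s m1 ms _ hb _ hp hpb _ _ hm ih =>
    subst hpb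
    cases ms with
    | nil => simp
    | cons m2 ms =>
      rw [List.isChain_cons_cons] at ih ⊢
      exact ⟨hb.suffixDom_append ⟨a :: s, hp.symm⟩ hm ih.1, ih.2⟩

end

/-- Lemma `factor`: if `ICFL(w) = (m₁, …, m_k)`, then `m_i` is not a factor of
`m₁ ⋯ m_{i-1}` (the index `i` is 0-based, so `m₁ ⋯ m_{i-1} = (M.take i).flatten`). -/
theorem stmt9 {α : Type*} [LinearOrder α] (w : List α) (hw : w ≠ [])
    (hwn : ¬ IsInvLyndon w)
    (M : List (List α)) (hM : IsICFL w M)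
    (i : ℕ) (hi0 : 0 < i) (hik : i < M.length) :
    ¬ M[i]! <:+: (M.take i).flatten := by
  have : IsTrans (List α) SuffixDom := ⟨fun _ _ _ => SuffixDom.trans⟩
  have hpw := List.isChain_iff_pairwise.1 hM.isChain
  rw [getElem!_pos M i hik]
  have hdom : ∀ x ∈ M.take i, SuffixDom x M[i] := by
    intro x hx
    obtain ⟨j, hj, rfl⟩ := List.mem_take_iff_getElem.1 hx
    exact List.pairwise_iff_getElem.1 hpw j i (by omega) hik (by omega)
  refine not_infix_flatten (fun h0 => ?_) _ hdom
  -- no word is `≪` the empty word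
  exact (List.pairwise_iff_getElem.1 hpw 0 i (by omega) hik hi0).1.right_ne_nil h0
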